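/- Let (W, S) be an arbitrary Coxeter system and let w ∈ W_c be fully commutative. Then |𝓛(w)| ≤ n(w) and |𝓡(w)| ≤ n(w). -/

import Mathlib

open CoxeterSystem

variable {B W : Type*} [Group W] {M : CoxeterMatrix B} (cs : CoxeterSystem M W)

/-- `m(s,t) ≥ 3`: `s` and `t` are distinct noncommuting generators
(`M s t = 0` encodes `m(s,t) = ∞`). -/
def Noncomm (M : CoxeterMatrix B) (s t : B) : Prop := M s t = 0 ∨ 3 ≤ M s t

/-- The longest element `w_{st}` of the rank-2 parabolic subgroup `⟨s,t⟩`
(meaningful when `3 ≤ M s t < ∞`). -/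
def longest (s t : B) : W := cs.wordProd (alternatingWord s t (M s t))

/-- `w` is complex: it admits a reduced factorization `x₁ · w_{st} · x₂` where `w_{st}`
is the longest element of a rank-2 parabolic subgroup `⟨s,t⟩` with `3 ≤ m(s,t) < ∞`. -/
def IsComplex (w : W) : Prop :=
  ∃ s t : B, 3 ≤ M s t ∧ ∃ x₁ x₂ : W,
    w = x₁ * longest cs s t * x₂ ∧
    cs.length w = cs.length x₁ + cs.length (longest cs s t : W) + cs.length x₂

/-- `w` is fully commutative, i.e. `w ∈ W_c`. -/
def FullyComm (w : W) : Prop := ¬ IsComplex cs w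

/-- `x` is weakly complex: `x` is complex and `x = s·u` reduced with `u` fully commutative. -/
def IsWeaklyComplex (x : W) : Prop :=
  IsComplex cs x ∧ ∃ (s : B) (u : W), FullyComm cs u ∧ x = cs.simple s * u ∧
    cs.length x = 1 + cs.length u

/-- The alternating product `t s t s ⋯` with `k` factors, beginning with `t`. -/
def altProd (t s : B) (k : ℕ) : W :=
  cs.wordProd ((List.range k).map (fun i => if i % 2 = 0 then t else s))

/-- The left descent set `𝓛(w)`. -/
def leftDescents (w : W) : Set B := {i | cs.IsLeftDescent w i}

/-- The right descent set `𝓡(w)`. -/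
def rightDescents (w : W) : Set B := {i | cs.IsRightDescent w i}

/-- `w` is a reduced product of distinct pairwise commuting generators. -/
def IsCommProd (w : W) : Prop :=
  ∃ l : List B, l.Nodup ∧ (∀ u ∈ l, ∀ u' ∈ l, u ≠ u' → M u u' = 2) ∧
    cs.IsReduced l ∧ w = cs.wordProd l

/-- `y` is left star reducible to `x` with respect to the pair `{s,t}`:
`x` and `y` lie in the same left `{s,t}`-string and `ℓ(x) = ℓ(y) − 1`. -/
def LeftStarReducible (s t : B) (y x : W) : Prop :=
  Noncomm M s t ∧
  ((cs.IsLeftDescent y s ∧ ¬ cs.IsLeftDescent y t ∧ x = cs.simple s * y ∧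
      cs.IsLeftDescent x t) ∨
   (cs.IsLeftDescent y t ∧ ¬ cs.IsLeftDescent y s ∧ x = cs.simple t * y ∧
      cs.IsLeftDescent x s))

/-- `y` is right star reducible to `x` with respect to the pair `{s,t}`. -/
def RightStarReducible (s t : B) (y x : W) : Prop :=
  Noncomm M s t ∧
  ((cs.IsRightDescent y s ∧ ¬ cs.IsRightDescent y t ∧ x = y * cs.simple s ∧
      cs.IsRightDescent x t) ∨
   (cs.IsRightDescent y t ∧ ¬ cs.IsRightDescent y s ∧ x = y * cs.simple t ∧
      cs.IsRightDescent x s))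

/-- `y` is star reducible to `x`: there is a (possibly empty) chain of left and right
star reductions from `y` to `x`. -/
def StarReducible (y x : W) : Prop :=
  Relation.ReflTransGen
    (fun a b => ∃ s t : B, LeftStarReducible cs s t a b ∨ RightStarReducible cs s t a b) y x

/-- Property F: every fully commutative element is star reducible to a reduced product of
distinct pairwise commuting generators. -/
def PropertyF : Prop := ∀ w : W, FullyComm cs w → ∃ x : W, StarReducible cs w x ∧ IsCommProd cs x

/-- `n(w)`: the maximum `k` such that `w` admits a reduced factorization `w = w₁·w₂·w₃`
with `w₂` a reduced product of `k` distinct pairwise commuting generators. -/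
noncomputable def nval (w : W) : ℕ :=
  sSup {k | ∃ w₁ w₂ w₃ : W, w = w₁ * w₂ * w₃ ∧
    cs.length w = cs.length w₁ + cs.length w₂ + cs.length w₃ ∧
    IsCommProd cs w₂ ∧ cs.length w₂ = k}

/-- The Bruhat order: `x ≤ w` iff some reduced word for `w` has a subword that is a
reduced word for `x`. -/
def BruhatLE (x w : W) : Prop :=
  ∃ l l' : List B, cs.IsReduced l ∧ cs.wordProd l = w ∧
    l'.Sublist l ∧ cs.IsReduced l' ∧ cs.wordProd l' = x

/-- `w = wI · wII` is the coset decomposition of `w` with respect to `I = {s,t}`: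
`wI ∈ W_I`, `𝓛(wII) ∩ I = ∅` and `ℓ(w) = ℓ(wI) + ℓ(wII)`. -/
def CosetDecompL (s t : B) (w wI wII : W) : Prop :=
  w = wI * wII ∧ wI ∈ Subgroup.closure {cs.simple s, cs.simple t} ∧
  ¬ cs.IsLeftDescent wII s ∧ ¬ cs.IsLeftDescent wII t ∧
  cs.length w = cs.length wI + cs.length wII

/-- `w = wII · wI` is the right coset decomposition of `w` with respect to `I = {s,t}`:
`wI ∈ W_I`, `𝓡(wII) ∩ I = ∅` and `ℓ(w) = ℓ(wII) + ℓ(wI)`. -/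
def CosetDecompR (s t : B) (w wII wI : W) : Prop :=
  w = wII * wI ∧ wI ∈ Subgroup.closure {cs.simple s, cs.simple t} ∧
  ¬ cs.IsRightDescent wII s ∧ ¬ cs.IsRightDescent wII t ∧
  cs.length w = cs.length wII + cs.length wI

/-- `k_ε(J) = (−1)^{|J ∩ ε⁻¹(0)|}` for a set `J` of generators. -/
noncomputable def kSet (ε : B → Bool) (J : Set B) : ℤ :=
  (-1) ^ (J ∩ {i | ε i = false}).ncard

/-- `k_ε(w) = k_ε(𝓛(w)) · k_ε(𝓡(w))`. -/
noncomputable def kElt (ε : B → Bool) (w : W) : ℤ :=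
  kSet ε (leftDescents cs w) * kSet ε (rightDescents cs w)

open Real in
/-- The `i`-th coroot of the geometric representation. -/
noncomputable def coroot (M : CoxeterMatrix B) (i : B) : Module.Dual ℝ (B →₀ ℝ) :=
  Finsupp.linearCombination ℝ fun j => -2 * cos (π / M i j)

open Real in
theorem coroot_single (M : CoxeterMatrix B) (i j : B) :
    coroot M i (Finsupp.single j 1) = -2 * cos (π / M i j) := by
  simp [coroot]

theorem coroot_self (M : CoxeterMatrix B) (i : B) :
    coroot M i (Finsupp.single i 1) = 2 := by
  simp [coroot_single]

/-- The action of the `i`-th generator in the geometric representation. -/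
noncomputable def geomReflection (M : CoxeterMatrix B) (i : B) :
    (B →₀ ℝ) ≃ₗ[ℝ] (B →₀ ℝ) := Module.reflection (coroot_self M i)

open Real in
theorem coroot_mul_coroot (M : CoxeterMatrix B) (i j : B) :
    coroot M i (Finsupp.single j 1) * coroot M j (Finsupp.single i 1) - 2 =
      2 * cos (2 * (π / M i j)) := by
  rw [coroot_single, coroot_single, M.symmetric j i, cos_two_mul]
  ring

open Real in
theorem sin_two_mul_pi_div_pos {m : ℕ} (h : 3 ≤ m) : 0 < sin (2 * (π / m)) := by
  have hm : (3 : ℝ) ≤ m := by exact_mod_cast h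
  refine sin_pos_of_pos_of_lt_pi (by positivity) ?_
  rw [← mul_div_assoc, div_lt_iff₀ (by linarith)]
  nlinarith [pi_pos]

open Real Polynomial in
theorem geomReflection_isLiftable (M : CoxeterMatrix B) : M.IsLiftable (geomReflection M) := by
  intro i j
  ext1 z
  rw [geomReflection, geomReflection, Module.reflection_mul_reflection_pow_apply _ _ _ _ _
    (coroot_mul_coroot M i j).symm]
  obtain h0 | h1 | h2 | h : M i j = 0 ∨ M i j = 1 ∨ M i j = 2 ∨ 3 ≤ M i j := by omega
  · simp [h0]
  · obtain rfl : i = j := by_contra fun hij => M.off_diagonal i j hij h1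
    simp only [coroot_self, LinearEquiv.coe_one, id_eq]
    module
  · have hij := coroot_single M i j
    have hji := coroot_single M j i
    rw [M.symmetric j i] at hji
    simp only [h2, Nat.cast_ofNat, cos_pi_div_two, mul_zero] at hij hji
    norm_num [h2, hij, hji, mul_div_cancel₀]
    abel
  have hs := (sin_two_mul_pi_div_pos h).ne'
  have hm : (M i j : ℝ) ≠ 0 := by positivity
  have key (n : ℤ) := Chebyshev.S_two_mul_real_cos (2 * (π / M i j)) n
  generalize M i j = m at *
  set t := 2 * cos (2 * (π / m))
  have zero (q : ℤ) (hq : 2 * q = m) : (Chebyshev.S ℝ (q - 1)).eval t = 0 := by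
    refine (mul_eq_zero_iff_right hs).1 ((key _).trans ?_)
    rw [← sin_pi]
    congr 1
    have : (2 * q : ℝ) = m := by exact_mod_cast hq
    push_cast
    field_simp
    linarith
  have zero' (q : ℤ) (hq : 2 * q + 1 = m) :
      (Chebyshev.S ℝ q).eval t + (Chebyshev.S ℝ (q - 1)).eval t = 0 := by
    refine (mul_eq_zero_iff_right hs).1 ?_
    have : (m : ℝ) = 2 * q + 1 := by exact_mod_cast hq.symm
    rw [add_mul, key, key, ← eq_neg_iff_add_eq_zero, ← sin_two_pi_sub]
    congr 1
    push_cast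
    field_simp
    linarith
  obtain ⟨q, hq | hq⟩ := Nat.even_or_odd' m
  · have e1 : ((m : ℤ) - 2) / 2 = q - 1 := by omega
    have e2 : ((m : ℤ) - 1) / 2 = q - 1 := by omega
    simp [e1, e2, zero q (by omega)]
  · have e1 : ((m : ℤ) - 2) / 2 = q - 1 := by omega
    have e2 : ((m : ℤ) - 1) / 2 = q := by omega
    have e3 : ((m : ℤ) - 3) / 2 = q - 1 := by omega
    have e4 : (m : ℤ) / 2 = q := by omega
    simp [e1, e2, e3, e4, zero' q (by omega)]

open Real Polynomial in
theorem pow_simple_mul_simple_ne_one (i j : B) (hij : i ≠ j) (k : ℕ) (hk : k ≠ 0)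
    (h : M i j = 0 ∨ k < M i j) : (cs.simple i * cs.simple j) ^ k ≠ 1 := by
  intro h1
  have h2 := congrArg (cs.lift ⟨_, geomReflection_isLiftable M⟩) h1
  rw [map_pow, map_mul, cs.lift_apply_simple, cs.lift_apply_simple, map_one] at h2
  have h3 := LinearEquiv.congr_fun h2 (Finsupp.single i 1)
  rw [geomReflection, geomReflection, Module.reflection_mul_reflection_pow_apply_self _ _ _ _
    (coroot_mul_coroot M i j).symm] at h3
  have hi := DFunLike.congr_fun h3 i
  have hj := DFunLike.congr_fun h3 j
  simp [hij, hij.symm, coroot_single, M.symmetric j i] at hi hj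
  have hM1 := M.off_diagonal i j hij
  obtain h0 | h2' | h3' : M i j = 0 ∨ M i j = 2 ∨ 3 ≤ M i j := by omega
  · simp [h0] at hj
    omega
  · obtain rfl : k = 1 := by omega
    norm_num [h2', mul_div_cancel₀] at hi
  have hm : (3 : ℝ) ≤ M i j := by exact_mod_cast h3'
  have hs := sin_two_mul_pi_div_pos h3'
  have key (n : ℤ) := Chebyshev.S_two_mul_real_cos (2 * (π / M i j)) n
  have hc : cos (π / M i j) ≠ 0 := by
    intro hc
    rw [sin_two_mul, hc] at hs
    simp at hs
  have hj' := hj.resolve_right hc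
  rw [hj', add_zero] at hi
  have k1 := key k
  have k2 := key (k - 1)
  rw [hj', zero_mul] at k2
  rw [hi] at k1
  push_cast at k1 k2
  rw [sub_add_cancel] at k2
  rw [add_mul, sin_add, ← k2, one_mul, one_mul, zero_mul, zero_add] at k1
  have hcos : cos (k * (2 * (π / M i j))) = 1 := (mul_right_cancel₀ hs.ne' (by linarith))
  have hk0 : (0 : ℝ) < k := by positivity
  have hkm : (k : ℝ) < M i j := by exact_mod_cast (by omega : k < M i j)
  rw [cos_eq_one_iff_of_lt_of_lt] at hcos
  · have : 0 < k * (2 * (π / M i j)) := by positivity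
    linarith
  · have : 0 < k * (2 * (π / M i j)) := by positivity
    linarith [pi_pos]
  · have : k * (2 * (π / M i j)) = (k / M i j) * (2 * π) := by ring
    rw [this]
    have : (k : ℝ) / M i j < 1 := by rw [div_lt_one] <;> linarith
    nlinarith [pi_pos]

open scoped Classical in
/-- The permutation of `W × ZMod 2` by which the simple reflection `s i` acts: it conjugates the
first coordinate and flips the second one exactly at `s i`. -/
noncomputable def signPerm (i : B) : Equiv.Perm (W × ZMod 2) :=
  Function.Involutive.toPerm
    (fun p => (cs.simple i * p.1 * cs.simple i, p.2 + if p.1 = cs.simple i then 1 else 0)) (by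
      rintro ⟨t, ε⟩
      have h : cs.simple i * t * cs.simple i = cs.simple i ↔ t = cs.simple i := by
        rw [mul_assoc, mul_eq_left, mul_eq_one_iff_eq_inv, cs.inv_simple]
      simp only [h]
      ext
      · simp [mul_assoc]
      · split_ifs
        · simp [add_assoc, CharTwo.add_self_eq_zero]
        · simp)

open scoped Classical in
theorem signPerm_apply (i : B) (t : W) (ε : ZMod 2) : signPerm cs i (t, ε) =
    (cs.simple i * t * cs.simple i, ε + if t = cs.simple i then 1 else 0) := rfl

open scoped Classical in
theorem prod_signPerm_reverse_apply (ω : List B) (t : W) (ε : ZMod 2) :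
    (ω.reverse.map (signPerm cs)).prod (t, ε) =
      ((cs.wordProd ω)⁻¹ * t * cs.wordProd ω, ε + (cs.leftInvSeq ω).count t) := by
  induction ω generalizing t ε with
  | nil => simp
  | cons i ω ih =>
    have hc : ((cs.leftInvSeq ω).map (MulAut.conj (cs.simple i))).count t =
        (cs.leftInvSeq ω).count (cs.simple i * t * cs.simple i) := by
      have := List.count_map_of_injective (cs.leftInvSeq ω) _ (MulAut.conj (cs.simple i)).injective
        (cs.simple i * t * cs.simple i)
      simpa [mul_assoc] using this
    simp only [List.reverse_cons, List.map_append, List.map_cons, List.map_nil, List.prod_append,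
      List.prod_singleton, Equiv.Perm.mul_apply]
    rw [signPerm_apply, ih]
    simp only [leftInvSeq, List.count_cons, hc, cs.wordProd_cons, mul_inv_rev, cs.inv_simple,
      mul_assoc, beq_iff_eq, Prod.mk.injEq, true_and, eq_comm (a := t)]
    push_cast
    ring

theorem leftInvSeq_alternatingWord_two_mul (i j : B) :
    cs.leftInvSeq (alternatingWord i j (2 * M i j)) =
      (cs.leftInvSeq (alternatingWord i j (2 * M i j))).take (M i j) ++
        (cs.leftInvSeq (alternatingWord i j (2 * M i j))).take (M i j) := by
  apply List.ext_getElem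
  · simp; omega
  · intro k h₁ h₂
    simp only [cs.length_leftInvSeq, length_alternatingWord] at h₁
    rw [List.getElem_append]
    split_ifs with hk
    · rw [List.getElem_take]
    · simp only [List.length_take, cs.length_leftInvSeq, length_alternatingWord] at hk
      rw [List.getElem_take, cs.getElem_leftInvSeq_alternatingWord _ _ _ _ h₁,
        cs.getElem_leftInvSeq_alternatingWord _ _ _ _ (by simp; omega),
        cs.prod_alternatingWord_eq_mul_pow, cs.prod_alternatingWord_eq_mul_pow]
      have hmin : min (M i j) (2 * M i j) = M i j := by omega
      obtain ⟨d, rfl⟩ : ∃ d, k = M i j + d := ⟨k - M i j, by omega⟩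
      have e1 : (2 * (M i j + d) + 1) / 2 = M i j + d := by omega
      have e2 : (2 * d + 1) / 2 = d := by omega
      simp [hmin, e1, e2, pow_add, cs.simple_mul_simple_pow']

theorem signPerm_isLiftable : M.IsLiftable (signPerm cs) := by
  classical
  intro i j
  have hrev : ∀ m : ℕ, ((alternatingWord j i (2 * m)).reverse.map (signPerm cs)).prod =
      (signPerm cs i * signPerm cs j) ^ m := by
    intro m
    induction m with
    | zero => simp [alternatingWord]
    | succ m ih =>
      rw [show 2 * (m + 1) = 2 * m + 1 + 1 by ring, alternatingWord_succ, alternatingWord_succ,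
        pow_succ', ← ih]
      simp [mul_assoc]
  rw [← hrev]
  ext1 ⟨t, ε⟩
  rw [prod_signPerm_reverse_apply, M.symmetric i j, leftInvSeq_alternatingWord_two_mul,
    cs.prod_alternatingWord_eq_mul_pow]
  simp [CharTwo.add_self_eq_zero, cs.simple_mul_simple_pow]

open scoped Classical in
/-- The number of occurrences of `t` in a left inversion sequence, modulo two, only depends on the
product of the word. -/
theorem cast_count_leftInvSeq_eq {ω ω' : List B} (h : cs.wordProd ω = cs.wordProd ω') (t : W) :
    ((cs.leftInvSeq ω).count t : ZMod 2) = (cs.leftInvSeq ω').count t := by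
  have key (ω : List B) : (ω.reverse.map (signPerm cs)).prod =
      cs.lift ⟨_, signPerm_isLiftable cs⟩ (cs.wordProd ω)⁻¹ := by
    rw [← cs.wordProd_reverse, wordProd, map_list_prod, List.map_map]
    congr 1
    refine List.map_congr_left fun i _ => ?_
    exact (cs.lift_apply_simple (signPerm_isLiftable cs) i).symm
  have h2 : (ω.reverse.map (signPerm cs)).prod (t, 0) =
      (ω'.reverse.map (signPerm cs)).prod (t, 0) := by rw [key, key, h]
  rw [prod_signPerm_reverse_apply, prod_signPerm_reverse_apply] at h2
  simpa using congrArg Prod.snd h2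

/-- The exchange property. -/
theorem simple_mem_leftInvSeq {ω : List B} {i : B}
    (hi : cs.IsLeftDescent (cs.wordProd ω) i) : cs.simple i ∈ cs.leftInvSeq ω := by
  classical
  by_contra hmem
  obtain ⟨ω', hω', h⟩ := cs.exists_isReduced (cs.simple i * cs.wordProd ω)
  have h' : cs.wordProd ω = cs.wordProd (i :: ω') := by simp [cs.wordProd_cons, ← h]
  have hc := cast_count_leftInvSeq_eq cs h' (cs.simple i)
  have hmem' : cs.simple i ∈ cs.leftInvSeq ω' := by
    by_contra hn
    have : cs.simple i ∉ (cs.leftInvSeq ω').map (MulAut.conj (cs.simple i)) := by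
      simp only [List.mem_map, not_exists, not_and]
      intro x hx hxi
      obtain rfl : x = cs.simple i := by
        rw [MulAut.conj_apply, mul_assoc, mul_eq_left, mul_eq_one_iff_eq_inv, inv_inv] at hxi
        exact hxi
      exact hn hx
    simp [leftInvSeq, List.count_eq_zero_of_not_mem hmem, List.count_eq_zero_of_not_mem this] at hc
  have := (cs.isLeftInversion_of_mem_leftInvSeq hω' hmem').2
  rw [← h] at this
  simp only [cs.simple_mul_simple_cancel_left] at this
  exact absurd hi (by unfold IsLeftDescent; omega)

theorem leftInvSeq_append (ω ω' : List B) : cs.leftInvSeq (ω ++ ω') =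
    cs.leftInvSeq ω ++ (cs.leftInvSeq ω').map (MulAut.conj (cs.wordProd ω)) := by
  induction ω with
  | nil => simp
  | cons i ω ih => simp [leftInvSeq, ih, cs.wordProd_cons]

/-- If a left descent of a reduced product `π ω * y` does not come from `ω`, then it can be
extracted from `y` to the left of `ω`. -/
theorem exists_eq_simple_mul_of_isLeftDescent {w y : W} {ω : List B} {i : B}
    (hw : w = cs.wordProd ω * y) (hl : cs.length w = ω.length + cs.length y)
    (hi : cs.IsLeftDescent w i) (hmem : cs.simple i ∉ cs.leftInvSeq ω) :
    ∃ y', w = cs.wordProd (i :: ω) * y' ∧ cs.length w = (i :: ω).length + cs.length y' := by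
  obtain ⟨ψ, hψ, rfl⟩ := cs.exists_isReduced y
  rw [← cs.wordProd_append] at hw
  have hex := simple_mem_leftInvSeq cs (hw ▸ hi)
  rw [leftInvSeq_append, List.mem_append, or_iff_right hmem, List.mem_map] at hex
  obtain ⟨r, hr, hri⟩ := hex
  have hlt := (cs.isLeftInversion_of_mem_leftInvSeq hψ hr).2
  have heq : w = cs.wordProd (i :: ω) * (r * cs.wordProd ψ) := by
    have hrr : r * r = 1 := (cs.isReflection_of_mem_leftInvSeq ψ hr).mul_self
    rw [cs.wordProd_cons, ← hri, hw, cs.wordProd_append, MulAut.conj_apply]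
    simp [mul_assoc, ← mul_assoc r r, hrr]
  refine ⟨_, heq, ?_⟩
  have h1 := cs.length_mul_le (cs.wordProd (i :: ω)) (r * cs.wordProd ψ)
  have h2 := cs.length_wordProd_le (i :: ω)
  rw [← heq] at h1
  simp only [List.length_cons] at *
  omega

theorem isReduced_of_length_mul {w y : W} {ω : List B} (hw : w = cs.wordProd ω * y)
    (hl : cs.length w = ω.length + cs.length y) : cs.IsReduced ω := by
  have h1 := cs.length_mul_le (cs.wordProd ω) y
  have h2 := cs.length_wordProd_le ω
  rw [← hw] at h1
  exact le_antisymm h2 (by omega)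

theorem exists_pow_of_mem_leftInvSeq_alternatingWord (i j : B) (k : ℕ) {r : W}
    (hr : r ∈ cs.leftInvSeq (alternatingWord i j k)) :
    ∃ n < k, cs.simple (if Even k then j else i) * r =
      (cs.simple (if Even k then j else i) * cs.simple (if Even k then i else j)) ^ (n + 1) := by
  induction k generalizing r with
  | zero => simp [alternatingWord] at hr
  | succ k ih =>
    rw [alternatingWord_succ', leftInvSeq, List.mem_cons, List.mem_map] at hr
    obtain rfl | ⟨r', hr', rfl⟩ := hr
    · refine ⟨0, by omega, ?_⟩
      by_cases hk : Even k <;> simp [hk, Nat.even_add_one]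
    · obtain ⟨n, hn, h⟩ := ih hr'
      refine ⟨n + 1, by omega, ?_⟩
      by_cases hk : Even k <;> simp only [hk, if_true, if_false, Nat.even_add_one, not_true,
        not_false_eq_true, MulAut.conj_apply, cs.inv_simple] at h ⊢ <;>
      · rw [h, ← mul_assoc, ← mul_pow_mul, mul_assoc, ← pow_succ]

theorem simple_injective : Function.Injective cs.simple := by
  intro i j h
  by_contra hij
  refine pow_simple_mul_simple_ne_one cs i j hij 1 one_ne_zero ?_ (by simp [h])
  have := M.off_diagonal i j hij
  omega

theorem exists_eq_alternatingWord_mul {w : W} {i j : B} (hij : i ≠ j)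
    (hi : cs.IsLeftDescent w i) (hj : cs.IsLeftDescent w j) (k : ℕ)
    (hk : M i j = 0 ∨ k ≤ M i j) :
    ∃ y, w = cs.wordProd (alternatingWord i j k) * y ∧
      cs.length w = (alternatingWord i j k).length + cs.length y := by
  induction k with
  | zero => exact ⟨w, by simp [alternatingWord]⟩
  | succ k ih =>
    obtain ⟨y, hy, hl⟩ := ih (by omega)
    rw [alternatingWord_succ']
    refine exists_eq_simple_mul_of_isLeftDescent cs hy hl (by split_ifs <;> assumption) ?_
    intro hmem
    obtain ⟨n, hn, h⟩ := exists_pow_of_mem_leftInvSeq_alternatingWord cs i j k hmem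
    rw [cs.simple_mul_simple_self] at h
    refine pow_simple_mul_simple_ne_one cs _ _ ?_ (n + 1) (by omega) ?_ h.symm
    · split_ifs
      exacts [hij.symm, hij]
    · have := M.symmetric i j
      split_ifs <;> omega

theorem FullyComm.eq_two_of_isLeftDescent {w : W} (hw : FullyComm cs w) {i j : B} (hij : i ≠ j)
    (hi : cs.IsLeftDescent w i) (hj : cs.IsLeftDescent w j) : M i j = 2 := by
  have h1 := M.off_diagonal i j hij
  by_contra h2
  have hex := exists_eq_alternatingWord_mul cs hij hi hj
  by_cases h0 : M i j = 0
  · obtain ⟨y, -, hl⟩ := hex (cs.length w + 1) (.inl h0)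
    rw [length_alternatingWord] at hl
    omega
  · obtain ⟨y, hy, hl⟩ := hex (M i j) (.inr le_rfl)
    have hred := isReduced_of_length_mul cs hy hl
    refine hw ⟨i, j, by omega, 1, y, by simpa [longest] using hy, ?_⟩
    rw [longest, hred.eq, hl]
    simp

theorem mem_of_mem_leftInvSeq_of_commute {l : List B} {r : W}
    (hl : ∀ u ∈ l, ∀ v ∈ l, u ≠ v → M u v = 2) (hr : r ∈ cs.leftInvSeq l) :
    ∃ u ∈ l, r = cs.simple u := by
  induction l generalizing r with
  | nil => simp at hr
  | cons i l ih =>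
    rw [leftInvSeq, List.mem_cons, List.mem_map] at hr
    obtain rfl | ⟨r', hr', rfl⟩ := hr
    · exact ⟨i, by simp, rfl⟩
    · obtain ⟨u, hu, rfl⟩ := ih (fun u hu v hv => hl u (by simp [hu]) v (by simp [hv])) hr'
      refine ⟨u, by simp [hu], ?_⟩
      by_cases hiu : i = u
      · simp [hiu]
      · have h2 := cs.simple_mul_simple_pow i u
        rw [hl i (by simp) u (by simp [hu]) hiu, pow_two, mul_eq_one_iff_eq_inv] at h2
        simp only [mul_inv_rev, cs.inv_simple] at h2
        simp [h2]

theorem FullyComm.exists_eq_wordProd_mul {w : W} (hw : FullyComm cs w) {l : List B}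
    (hnd : l.Nodup) (hl : ∀ u ∈ l, cs.IsLeftDescent w u) :
    ∃ y, w = cs.wordProd l * y ∧ cs.length w = l.length + cs.length y := by
  induction l with
  | nil => exact ⟨w, by simp⟩
  | cons i l ih =>
    have hl' : ∀ u ∈ l, cs.IsLeftDescent w u := fun u hu => hl u (List.mem_cons_of_mem i hu)
    rw [List.nodup_cons] at hnd
    obtain ⟨y, hy, hlen⟩ := ih hnd.2 hl'
    refine exists_eq_simple_mul_of_isLeftDescent cs hy hlen (hl i List.mem_cons_self) fun hmem => ?_
    obtain ⟨u, hu, h⟩ := mem_of_mem_leftInvSeq_of_commute cs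
      (fun u hu v hv huv => hw.eq_two_of_isLeftDescent cs huv (hl' u hu) (hl' v hv)) hmem
    exact hnd.1 (simple_injective cs h ▸ hu)

theorem longest_inv (s t : B) : (longest cs s t)⁻¹ = longest cs s t := by
  rw [longest, cs.prod_alternatingWord_eq_mul_pow]
  split_ifs with h
  · rw [one_mul, inv_eq_iff_mul_eq_one, ← pow_add, ← two_mul, Nat.two_mul_div_two_of_even h,
      cs.simple_mul_simple_pow]
  · rw [mul_inv_rev, ← inv_pow, mul_inv_rev, cs.inv_simple, cs.inv_simple, mul_pow_mul]

theorem IsComplex.inv {w : W} (hw : IsComplex cs w) : IsComplex cs w⁻¹ := by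
  obtain ⟨s, t, hst, x₁, x₂, rfl, hl⟩ := hw
  refine ⟨s, t, hst, x₂⁻¹, x₁⁻¹, ?_, ?_⟩
  · rw [mul_inv_rev, mul_inv_rev, longest_inv, mul_assoc]
  · rw [cs.length_inv, cs.length_inv, cs.length_inv, hl]
    ring

theorem le_nval {w w₁ w₂ w₃ : W} (hw : w = w₁ * w₂ * w₃)
    (hl : cs.length w = cs.length w₁ + cs.length w₂ + cs.length w₃) (h₂ : IsCommProd cs w₂) :
    cs.length w₂ ≤ nval cs w := by
  refine le_csSup ⟨cs.length w, ?_⟩ ⟨w₁, w₂, w₃, hw, hl, h₂, rfl⟩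
  rintro k ⟨x₁, x₂, x₃, -, h, -, rfl⟩
  omega

theorem FullyComm.exists_isCommProd_mul {w : W} (hw : FullyComm cs w) :
    ∃ x y, w = x * y ∧ cs.length w = cs.length x + cs.length y ∧ IsCommProd cs x ∧
      (leftDescents cs w).ncard ≤ cs.length x := by
  by_cases hfin : (leftDescents cs w).Finite
  · have hmem : ∀ u ∈ hfin.toFinset.toList, cs.IsLeftDescent w u := fun u hu => by
      simpa [leftDescents] using hu
    have hnd := hfin.toFinset.nodup_toList
    obtain ⟨y, hy, hl⟩ := hw.exists_eq_wordProd_mul cs hnd hmem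
    have hred := isReduced_of_length_mul cs hy hl
    refine ⟨_, y, hy, by rw [hred.eq, hl], ⟨_, hnd, fun u hu v hv huv =>
      hw.eq_two_of_isLeftDescent cs huv (hmem u hu) (hmem v hv), hred, rfl⟩, ?_⟩
    rw [hred.eq, Finset.length_toList, Set.ncard_eq_toFinset_card _ hfin]
  · refine ⟨1, w, by simp, by simp, ⟨[], by simp [CoxeterSystem.IsReduced]⟩, ?_⟩
    simp [Set.Infinite.ncard hfin]

theorem IsCommProd.inv {x : W} (hx : IsCommProd cs x) : IsCommProd cs x⁻¹ := by
  obtain ⟨l, hnd, hc, hred, rfl⟩ := hx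
  exact ⟨l.reverse, by simpa using hnd, by simpa using hc, hred.reverse, by simp⟩

/-- For any fully commutative `w` we have `|𝓛(w)| ≤ n(w)` and `|𝓡(w)| ≤ n(w)`. -/
theorem statement15 (w : W) (hw : FullyComm cs w) :
    (leftDescents cs w).ncard ≤ nval cs w ∧ (rightDescents cs w).ncard ≤ nval cs w := by
  constructor
  · obtain ⟨x, y, hxy, hl, hx, hcard⟩ := hw.exists_isCommProd_mul cs
    exact hcard.trans (le_nval cs (w₁ := 1) (by simpa using hxy) (by simpa using hl) hx)
  · have hw' : FullyComm cs w⁻¹ := fun h => hw (by simpa using h.inv cs)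
    obtain ⟨x, y, hxy, hl, hx, hcard⟩ := hw'.exists_isCommProd_mul cs
    have hdesc : leftDescents cs w⁻¹ = rightDescents cs w := by
      ext i
      exact cs.isLeftDescent_inv_iff
    rw [hdesc, ← cs.length_inv] at hcard
    refine hcard.trans (le_nval cs (w₁ := y⁻¹) (w₃ := 1) ?_ ?_ (hx.inv cs))
    · rw [mul_one, ← mul_inv_rev, ← hxy, inv_inv]
    · simpa [add_comm] using hl
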